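/- Assume β² = i. The following assignments define Q-module structures: X⁺₁ and X⁻₁ are one-dimensional with K acting by +1 and −1 respectively and E, F acting by 0; X⁺₂ and X⁻₂ are two-dimensional with basis v₀, v₁ and actions K·v₀ = ±i·v₀, K·v₁ = ∓i·v₁, E·v₀ = 0, E·v₁ = ±v₀, F·v₀ = v₁, F·v₁ = 0. For a finite-dimensional Q-module V, let qTr_V : Q → ℂ be qTr_V(a) = Tr_V(K·a) (the q-trace with balancing element g = K^{-1}), and let χ_V = (qTr_V ⊗ id)(M) ∈ Q be its image under the Drinfeld mapping, where M = R₂₁·R. Then χ_{X⁺₁} = 1, χ_{X⁻₁} = −K², χ_{X⁺₂} = 4·C and χ_{X⁻₂} = −4·C·K², where C = FE − (i/4)(K − K^{-1}) is the Casimir element. These four elements, together with the five-dimensionality of the centre, give a four-dimensional subspace of the centre of Q. -/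

import Mathlib

open TensorProduct

set_option maxHeartbeats 1000000
set_option synthInstance.maxHeartbeats 400000

noncomputable section

/-- Generators of the restricted quantum group `Q = \bar U_i sl(2)`. -/
inductive QGen : Type
  | E | F | K | Kinv
deriving DecidableEq

/-- The free algebra on the generators. -/
abbrev FA : Type := FreeAlgebra ℂ QGen

def ιE : FA := FreeAlgebra.ι ℂ QGen.E
def ιF : FA := FreeAlgebra.ι ℂ QGen.F
def ιK : FA := FreeAlgebra.ι ℂ QGen.K
def ιKi : FA := FreeAlgebra.ι ℂ QGen.Kinv

/-- Defining relations of `\bar U_i sl(2)` (at `q = i`, i.e. `p = 2`). -/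
inductive QRel : FA → FA → Prop
  | KKi : QRel (ιK * ιKi) 1
  | KiK : QRel (ιKi * ιK) 1
  | KEKi : QRel (ιK * ιE * ιKi) (-ιE)
  | KFKi : QRel (ιK * ιF * ιKi) (-ιF)
  | EF : QRel (ιE * ιF - ιF * ιE) ((2 * Complex.I)⁻¹ • (ιK - ιKi))
  | Esq : QRel (ιE ^ 2) 0
  | Fsq : QRel (ιF ^ 2) 0
  | K4 : QRel (ιK ^ 4) 1

/-- The restricted quantum group `\bar U_i sl(2)`: the quotient of the free algebra
by the two-sided ideal generated by the defining relations. -/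
abbrev Q : Type := RingQuot QRel

def gE : Q := RingQuot.mkAlgHom ℂ QRel ιE
def gF : Q := RingQuot.mkAlgHom ℂ QRel ιF
def gK : Q := RingQuot.mkAlgHom ℂ QRel ιK
def gKi : Q := RingQuot.mkAlgHom ℂ QRel ιKi

section Gadgets

variable (k : Type) [Field k] (A : Type) [Ring A] [Algebra k A]

abbrev TP2 : Type := A ⊗[k] A
abbrev TP3 : Type := A ⊗[k] (A ⊗[k] A)
abbrev TP4 : Type := A ⊗[k] (A ⊗[k] (A ⊗[k] A))

/-- Multiplication `a ⊗ b ↦ a * b`. -/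
def mulA : TP2 k A →ₗ[k] A := LinearMap.mul' k A

/-- Tensor flip `a ⊗ b ↦ b ⊗ a`. -/
def flipA : TP2 k A →ₗ[k] TP2 k A := (TensorProduct.comm k A A).toLinearMap

/-- `a ↦ a ⊗ 1`. -/
def lTen : A →ₗ[k] TP2 k A := (TensorProduct.mk k A A).flip 1

/-- `a ↦ 1 ⊗ a`. -/
def rTen : A →ₗ[k] TP2 k A := TensorProduct.mk k A A 1

/-- `a ⊗ b ↦ a ⊗ b ⊗ 1`. -/
def emb12 : TP2 k A →ₗ[k] TP3 k A := TensorProduct.map LinearMap.id (lTen k A)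

/-- `a ⊗ b ↦ a ⊗ 1 ⊗ b`. -/
def emb13 : TP2 k A →ₗ[k] TP3 k A := TensorProduct.map LinearMap.id (rTen k A)

/-- `a ⊗ b ↦ 1 ⊗ a ⊗ b`. -/
def emb23 : TP2 k A →ₗ[k] TP3 k A := TensorProduct.mk k A (TP2 k A) 1

/-- `a ⊗ b ⊗ c ↦ a ⊗ c ⊗ b`. -/
def perm132 : TP3 k A →ₗ[k] TP3 k A := TensorProduct.map LinearMap.id (flipA k A)

/-- `a ⊗ b ⊗ c ↦ b ⊗ c ⊗ a`. -/
def perm231 : TP3 k A →ₗ[k] TP3 k A :=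
  (TensorProduct.assoc k A A A).toLinearMap ∘ₗ (TensorProduct.comm k A (TP2 k A)).toLinearMap

/-- `a ⊗ b ⊗ c ↦ c ⊗ a ⊗ b`. -/
def perm312 : TP3 k A →ₗ[k] TP3 k A :=
  (TensorProduct.comm k (TP2 k A) A).toLinearMap ∘ₗ (TensorProduct.assoc k A A A).symm.toLinearMap

/-- `a ⊗ b ⊗ c ↦ b ⊗ a ⊗ c`. -/
def perm213 : TP3 k A →ₗ[k] TP3 k A :=
  (TensorProduct.assoc k A A A).toLinearMap ∘ₗ
    (TensorProduct.map (flipA k A) LinearMap.id) ∘ₗ (TensorProduct.assoc k A A A).symm.toLinearMap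

variable {k A}

/-- `(Δ ⊗ id)` on two tensor factors, landing in the triple tensor product. -/
def copL (D : A →ₐ[k] TP2 k A) : TP2 k A →ₗ[k] TP3 k A :=
  (TensorProduct.assoc k A A A).toLinearMap ∘ₗ TensorProduct.map D.toLinearMap LinearMap.id

/-- `(id ⊗ Δ)` on two tensor factors. -/
def copR (D : A →ₐ[k] TP2 k A) : TP2 k A →ₗ[k] TP3 k A :=
  TensorProduct.map LinearMap.id D.toLinearMap

/-- `(ε ⊗ id) : A ⊗ A → A`. -/
def cuL (ce : A →ₐ[k] k) : TP2 k A →ₗ[k] A :=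
  (TensorProduct.lid k A).toLinearMap ∘ₗ TensorProduct.map ce.toLinearMap LinearMap.id

/-- `(id ⊗ ε) : A ⊗ A → A`. -/
def cuR (ce : A →ₐ[k] k) : TP2 k A →ₗ[k] A :=
  (TensorProduct.rid k A).toLinearMap ∘ₗ TensorProduct.map LinearMap.id ce.toLinearMap

/-- `(id ⊗ ε ⊗ id) : A ⊗ A ⊗ A → A ⊗ A`. -/
def cuMid (ce : A →ₐ[k] k) : TP3 k A →ₗ[k] TP2 k A :=
  TensorProduct.map LinearMap.id (cuL ce)

/-- `(Δ ⊗ id ⊗ id)`. -/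
def cop4_1 (D : A →ₐ[k] TP2 k A) : TP3 k A →ₗ[k] TP4 k A :=
  (TensorProduct.assoc k A A (TP2 k A)).toLinearMap ∘ₗ TensorProduct.map D.toLinearMap LinearMap.id

/-- `(id ⊗ Δ ⊗ id)`. -/
def cop4_2 (D : A →ₐ[k] TP2 k A) : TP3 k A →ₗ[k] TP4 k A :=
  TensorProduct.map LinearMap.id (copL D)

/-- `(id ⊗ id ⊗ Δ)`. -/
def cop4_3 (D : A →ₐ[k] TP2 k A) : TP3 k A →ₗ[k] TP4 k A :=
  TensorProduct.map LinearMap.id (copR D)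

/-- `a ⊗ b ⊗ c ↦ a ⊗ b ⊗ c ⊗ 1`, i.e. `Φ ↦ Φ ⊗ 1`. -/
def pad4 : TP3 k A →ₗ[k] TP4 k A :=
  TensorProduct.map LinearMap.id (TensorProduct.map LinearMap.id (lTen k A))

/-- `a ⊗ b ⊗ c ↦ f(a) * g(b) * h(c)`. -/
def tmap3 (f g h : A →ₗ[k] A) : TP3 k A →ₗ[k] A :=
  mulA k A ∘ₗ TensorProduct.map f (mulA k A ∘ₗ TensorProduct.map g h)

/-- `a ⊗ b ↦ S(a) * b`, used in the antipode axiom `m ∘ (S ⊗ id) ∘ Δ = 1·ε`. -/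
def antipL (s : A →ₗ[k] A) : TP2 k A →ₗ[k] A := mulA k A ∘ₗ TensorProduct.map s LinearMap.id

/-- `a ⊗ b ↦ a * S(b)`. -/
def antipR (s : A →ₗ[k] A) : TP2 k A →ₗ[k] A := mulA k A ∘ₗ TensorProduct.map LinearMap.id s

end Gadgets

/-- Central idempotent `e₀ = (1 + K²)/2`. -/
def e0 : Q := (2:ℂ)⁻¹ • (1 + gK ^ 2)

/-- Central idempotent `e₁ = (1 − K²)/2`. -/
def e1 : Q := (2:ℂ)⁻¹ • (1 - gK ^ 2)

/-- `f⁺ = −i F`. -/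
def fp : Q := (-Complex.I) • gF

/-- `f⁻ = E K⁻¹`. -/
def fm : Q := gE * gKi

/-- The Casimir element `C = FE − (i/4)(K − K⁻¹)`. -/
def Cas : Q := gF * gE - (Complex.I / 4) • (gK - gKi)

def t2 (a b : Q) : TP2 ℂ Q := a ⊗ₜ[ℂ] b

def t3 (a b c : Q) : TP3 ℂ Q := a ⊗ₜ[ℂ] (b ⊗ₜ[ℂ] c)

def eEF : Q := gE * gF
def eEK : Q := gE * gK
def eFK : Q := gF * gK
def eEFK : Q := gE * gF * gK

/-- `Φ^{010}` component of the coassociator. -/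
def Phi010 : TP3 ℂ Q :=
  t3 1 1 1 - (1 + Complex.I) • t3 gE gK gF + (1 - Complex.I) • t3 eFK gK eEK
    + (2:ℂ) • t3 eEFK 1 eEFK

/-- `Φ^{101}` component of the coassociator. -/
def Phi101 : TP3 ℂ Q :=
  (Complex.I - 1) • t3 1 gF eEK + t3 1 gK 1 + (2:ℂ) • t3 1 eEF eEFK
    - (1 + Complex.I) • t3 1 eEK gF - (1 + Complex.I) • t3 gE eFK 1
    + (2 * Complex.I) • t3 gE eEFK gF + (1 - Complex.I) • t3 eFK gE 1
    - (2 * Complex.I) • t3 eFK eEFK eEK - (2:ℂ) • t3 eEFK eEF 1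

/-- `Φ^{111}` component of the coassociator. -/
def Phi111 (β : ℂ) : TP3 ℂ Q :=
  (Complex.I * β ^ 2) • (
    (1 + Complex.I) • t3 1 gF eEK - t3 1 gK 1 - (2:ℂ) • t3 1 eEF 1
      - (2 * Complex.I) • t3 1 eEF eEFK + (1 + Complex.I) • t3 1 eEK gF
      - (1 + Complex.I) • t3 gE 1 gF + (1 + Complex.I) • t3 gE eFK 1
      + (2 * Complex.I) • t3 gE eFK eEFK + (2:ℂ) • t3 gE eEFK gF
      - (1 + Complex.I) • t3 eFK 1 eEK + (1 + Complex.I) • t3 eFK gE 1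
      + (2 * Complex.I) • t3 eFK gE eEFK + (2:ℂ) • t3 eFK eEFK eEK
      + (2 * Complex.I) • t3 eEFK gF eEK + (2 * Complex.I) • t3 eEFK gK eEFK
      - (2 * Complex.I) • t3 eEFK eEF 1 + (2 * Complex.I) • t3 eEFK eEK gF
      + (4:ℂ) • t3 eEFK eEF eEFK)

/-- The coassociator `Φ` of the quasi-Hopf algebra structure on `Q`. -/
def Phi (β : ℂ) : TP3 ℂ Q :=
  t3 e0 e0 e0 + t3 e1 e0 e0 + Phi010 * t3 e0 e1 e0 + t3 e0 e0 e1
    + t3 e1 e1 e0 + Phi101 * t3 e1 e0 e1 + t3 e0 e1 e1 + Phi111 β * t3 e1 e1 e1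

def R00 : TP2 ℂ Q :=
  (2:ℂ)⁻¹ • ((t2 1 1 + t2 1 gK + t2 gK 1 - t2 gK gK) * (t2 1 1 + (2 * Complex.I) • t2 gE gF))

def R01 : TP2 ℂ Q :=
  (2:ℂ)⁻¹ • ((t2 1 1 - Complex.I • t2 1 gK + t2 gK 1 + Complex.I • t2 gK gK) *
    (t2 1 1 + (1 - Complex.I) • t2 eFK eEK - (1 - Complex.I) • t2 gE gF
      + (1 + Complex.I) • t2 eEFK 1 + (2 * Complex.I) • t2 eEFK eEFK))

def R10 : TP2 ℂ Q :=
  (2:ℂ)⁻¹ • ((t2 1 1 + t2 1 gK - Complex.I • t2 gK 1 + Complex.I • t2 gK gK) *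
    (t2 1 gK + (1 - Complex.I) • t2 eFK gE + (1 - Complex.I) • t2 gE eFK
      - (1 - Complex.I) • t2 1 eEF - (2 * Complex.I) • t2 eEFK eEF))

def R11 (β : ℂ) : TP2 ℂ Q :=
  (β / 2) • ((t2 1 1 - Complex.I • t2 1 gK - Complex.I • t2 gK 1 + t2 gK gK) *
    ((-Complex.I) • t2 gK 1 + (2 * Complex.I) • t2 eEK gF + (1 - Complex.I) • t2 gK eEFK
      - (1 + Complex.I) • t2 eEF 1 - (2 * Complex.I) • t2 eEF eEFK))

/-- The universal R-matrix `R` of the quasi-triangular quasi-Hopf structure on `Q`. -/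
def Rmat (β : ℂ) : TP2 ℂ Q :=
  R00 * t2 e0 e0 + R01 * t2 e0 e1 + R10 * t2 e1 e0 + R11 β * t2 e1 e1

/-- The standard R-matrix `R_st` of the quotient `Q/(K²-1)`. -/
def Rst : TP2 ℂ Q :=
  (2:ℂ)⁻¹ • ∑ m ∈ Finset.range 2, ∑ n ∈ Finset.range 2,
    ((-1:ℂ) ^ (m * n)) • (t2 (gK ^ m) (gK ^ n) * (t2 1 1 + (2 * Complex.I) • t2 gE gF))

/-- The monodromy matrix `M = R₂₁ · R`. -/
def Mmat (β : ℂ) : TP2 ℂ Q := flipA ℂ Q (Rmat β) * Rmat β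

/-- The ribbon element `v = (e₀ − iβ K e₁)(1 − 2 f⁺ f⁻)`. -/
def vRib (β : ℂ) : Q := (e0 - (Complex.I * β) • (gK * e1)) * (1 - (2:ℂ) • (fp * fm))

/-- The coevaluation element `β = e₀ − 2iβ² C e₁`. -/
def bbEl (β : ℂ) : Q := e0 - (2 * Complex.I * β ^ 2) • (Cas * e1)

/-- `b ⊗ c ↦ S(b · bb · S(c))`, inner part of the Drinfeld element. -/
def uInner (S : Q →ₗ[ℂ] Q) (bb : Q) : TP2 ℂ Q →ₗ[ℂ] Q :=
  S ∘ₗ mulA ℂ Q ∘ₗ TensorProduct.map (LinearMap.mulRight ℂ bb) S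

/-- `Φ' ⊗ Φ'' ⊗ Φ''' ↦ S(Φ'' · bb · S(Φ''')) ⊗ Φ'`. -/
def uMap1 (S : Q →ₗ[ℂ] Q) (bb : Q) : TP3 ℂ Q →ₗ[ℂ] TP2 ℂ Q :=
  TensorProduct.map (uInner S bb) LinearMap.id ∘ₗ (TensorProduct.comm ℂ Q (TP2 ℂ Q)).toLinearMap

/-- `R' ⊗ R'' ↦ S(R'') · al · R'`. -/
def uMap2 (S : Q →ₗ[ℂ] Q) (al : Q) : TP2 ℂ Q →ₗ[ℂ] Q :=
  mulA ℂ Q ∘ₗ TensorProduct.map (LinearMap.mulRight ℂ al ∘ₗ S) LinearMap.id ∘ₗ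
    (TensorProduct.comm ℂ Q Q).toLinearMap

/-- `(x ⊗ a) ⊗ (R' ⊗ R'') ↦ x · (S(R'') · al · R') · a`. -/
def uBig (S : Q →ₗ[ℂ] Q) (al : Q) : TP2 ℂ Q ⊗[ℂ] TP2 ℂ Q →ₗ[ℂ] Q :=
  mulA ℂ Q ∘ₗ TensorProduct.map LinearMap.id (mulA ℂ Q ∘ₗ (TensorProduct.comm ℂ Q Q).toLinearMap)
    ∘ₗ (TensorProduct.assoc ℂ Q Q Q).toLinearMap ∘ₗ TensorProduct.map LinearMap.id (uMap2 S al)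

/-- The Drinfeld element `u = Σ S(Φ''·b·S(Φ'''))·S(R'')·α·R'·Φ'` (with `α = 1`). -/
def uDrin (β : ℂ) (S : Q →ₗ[ℂ] Q) : Q :=
  uBig S 1 (uMap1 S (bbEl β) (Phi β) ⊗ₜ[ℂ] Rmat β)

/-- The balancing element `g = b · S(α) · v⁻¹ · u` (with `α = 1`). -/
def balG (β : ℂ) (S : Q →ₗ[ℂ] Q) : Q :=
  bbEl β * S 1 * Ring.inverse (vRib β) * uDrin β S

/-- The cointegral `c = (β²/i)·E·F·(1 + K + K² + K³)`. -/
def cInt (β : ℂ) : Q := (β ^ 2 / Complex.I) • (gE * gF * (1 + gK + gK ^ 2 + gK ^ 3))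

/-- The q-trace of a one-dimensional representation, with balancing element `K⁻¹`. -/
def qTr1 (ρ : Q →ₐ[ℂ] ℂ) : Q →ₗ[ℂ] ℂ := ρ.toLinearMap ∘ₗ LinearMap.mulLeft ℂ gK

/-- The q-trace of a two-dimensional (matrix) representation, with balancing element `K⁻¹`. -/
def qTrM (ρ : Q →ₐ[ℂ] Matrix (Fin 2) (Fin 2) ℂ) : Q →ₗ[ℂ] ℂ :=
  Matrix.traceLinearMap (Fin 2) ℂ ℂ ∘ₗ ρ.toLinearMap ∘ₗ LinearMap.mulLeft ℂ gK

/-- The Drinfeld mapping `φ ↦ (φ ⊗ id)(M)`. -/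
def drinfeldImg (β : ℂ) (φ : Q →ₗ[ℂ] ℂ) : Q :=
  (TensorProduct.lid ℂ Q) (TensorProduct.map φ LinearMap.id (Mmat β))


/-! ### Relations in `Q` -/

lemma q_KKi : gK * gKi = 1 := by
  have := RingQuot.mkAlgHom_rel ℂ QRel.KKi
  rw [map_mul, map_one] at this
  exact this

lemma q_KiK : gKi * gK = 1 := by
  have := RingQuot.mkAlgHom_rel ℂ QRel.KiK
  rw [map_mul, map_one] at this
  exact this

lemma q_K4 : gK ^ 4 = 1 := by
  have := RingQuot.mkAlgHom_rel ℂ QRel.K4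
  rw [map_pow, map_one] at this
  exact this

lemma q_Ki : gKi = gK ^ 3 := by
  have h : gKi * gK ^ 4 = gK ^ 3 := by
    rw [pow_succ' gK 3, ← mul_assoc, q_KiK, one_mul]
  rw [← h, q_K4, mul_one]

lemma q_KE : gK * gE = -(gE * gK) := by
  have h := RingQuot.mkAlgHom_rel ℂ QRel.KEKi
  simp only [map_mul, map_neg] at h
  change gK * gE * gKi = -gE at h
  calc gK * gE = gK * gE * (gKi * gK) := by rw [q_KiK, mul_one]
    _ = (gK * gE * gKi) * gK := by simp only [mul_assoc]
    _ = _ := by rw [h]; exact neg_mul (_ : Q) _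

lemma q_KF : gK * gF = -(gF * gK) := by
  have h := RingQuot.mkAlgHom_rel ℂ QRel.KFKi
  simp only [map_mul, map_neg] at h
  change gK * gF * gKi = -gF at h
  calc gK * gF = gK * gF * (gKi * gK) := by rw [q_KiK, mul_one]
    _ = (gK * gF * gKi) * gK := by simp only [mul_assoc]
    _ = _ := by rw [h]; exact neg_mul (_ : Q) _

lemma q_EE : gE * gE = 0 := by
  have := RingQuot.mkAlgHom_rel ℂ QRel.Esq
  rw [map_pow, map_zero, sq] at this
  exact this

lemma q_FF : gF * gF = 0 := by
  have := RingQuot.mkAlgHom_rel ℂ QRel.Fsq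
  rw [map_pow, map_zero, sq] at this
  exact this

lemma q_FE : gF * gE = gE * gF + (Complex.I / 2) • (gK - gK ^ 3) := by
  have h := RingQuot.mkAlgHom_rel ℂ QRel.EF
  simp only [map_mul, map_sub, map_smul] at h
  change gE * gF - gF * gE = (2 * Complex.I)⁻¹ • (gK - gKi) at h
  have h2 : (2 * Complex.I)⁻¹ = -(Complex.I / 2) := by
    rw [mul_inv, Complex.inv_I]; ring
  rw [h2, q_Ki] at h
  rw [sub_eq_iff_eq_add] at h
  rw [h]; module

/-- Representations of `Q` from elements satisfying the relations. -/
lemma exists_rep {A : Type} [Ring A] [Algebra ℂ A] (e f k : A) (h4 : k ^ 4 = 1)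
    (hE : k * e = -(e * k)) (hF : k * f = -(f * k)) (he : e * e = 0) (hf : f * f = 0)
    (hfe : f * e = e * f + (Complex.I / 2) • (k - k ^ 3)) :
    ∃ ρ : Q →ₐ[ℂ] A, ρ gE = e ∧ ρ gF = f ∧ ρ gK = k := by
  have h4' : k * k ^ 3 = 1 := by rw [← pow_succ', h4]
  have h4'' : k ^ 3 * k = 1 := by rw [← pow_succ, h4]
  let g : QGen → A := fun x => match x with
    | QGen.E => e | QGen.F => f | QGen.K => k | QGen.Kinv => k ^ 3
  let φ : FA →ₐ[ℂ] A := FreeAlgebra.lift ℂ g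
  have hφE : φ ιE = e := FreeAlgebra.lift_ι_apply g QGen.E
  have hφF : φ ιF = f := FreeAlgebra.lift_ι_apply g QGen.F
  have hφK : φ ιK = k := FreeAlgebra.lift_ι_apply g QGen.K
  have hφKi : φ ιKi = k ^ 3 := FreeAlgebra.lift_ι_apply g QGen.Kinv
  have key : ∀ ⦃x y : FA⦄, QRel x y → φ x = φ y := by
    intro x y h
    cases h
    · rw [map_mul, hφK, hφKi, h4', map_one]
    · rw [map_mul, hφK, hφKi, h4'', map_one]
    · rw [map_mul, map_mul, map_neg, hφK, hφKi, hφE, hE, neg_mul, mul_assoc, h4', mul_one]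
    · rw [map_mul, map_mul, map_neg, hφK, hφKi, hφF, hF, neg_mul, mul_assoc, h4', mul_one]
    · have h2 : (2 * Complex.I)⁻¹ = -(Complex.I / 2) := by
        rw [mul_inv, Complex.inv_I]; ring
      rw [map_sub, map_mul, map_mul, map_smul, map_sub, hφK, hφKi, hφE, hφF, hfe, h2]
      module
    · rw [map_pow, map_zero, hφE, sq, he]
    · rw [map_pow, map_zero, hφF, sq, hf]
    · rw [map_pow, map_one, hφK, h4]
  refine ⟨RingQuot.liftAlgHom ℂ ⟨φ, key⟩, ?_, ?_, ?_⟩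
  · exact (RingQuot.liftAlgHom_mkAlgHom_apply (S := ℂ) φ key ιE).trans hφE
  · exact (RingQuot.liftAlgHom_mkAlgHom_apply (S := ℂ) φ key ιF).trans hφF
  · exact (RingQuot.liftAlgHom_mkAlgHom_apply (S := ℂ) φ key ιK).trans hφK

/-- Induction principle: a subspace of `Q` containing `1` and stable under left
multiplication by the generators is everything. -/
lemma q_induction (p : Submodule ℂ Q) (h1 : (1 : Q) ∈ p) (hE : ∀ x ∈ p, gE * x ∈ p)
    (hF : ∀ x ∈ p, gF * x ∈ p) (hK : ∀ x ∈ p, gK * x ∈ p) (x : Q) : x ∈ p := by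
  obtain ⟨y, rfl⟩ := RingQuot.mkAlgHom_surjective ℂ QRel x
  suffices h : ∀ y : FA, ∀ x ∈ p, RingQuot.mkAlgHom ℂ QRel y * x ∈ p by
    simpa using h y 1 h1
  intro y
  induction y using FreeAlgebra.induction with
  | grade0 r =>
    intro x hx
    rw [AlgHom.commutes, ← Algebra.smul_def]
    exact p.smul_mem _ hx
  | grade1 g =>
    cases g with
    | E => exact hE
    | F => exact hF
    | K => exact hK
    | Kinv =>
      intro x hx
      change gKi * x ∈ p
      rw [q_Ki, pow_succ, pow_succ, pow_one, mul_assoc, mul_assoc]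
      exact hK _ (hK _ (hK _ hx))
  | mul a b ha hb =>
    intro x hx
    rw [map_mul, mul_assoc]
    exact ha _ (hb _ hx)
  | add a b ha hb =>
    intro x hx
    rw [map_add, add_mul]
    exact p.add_mem (ha _ hx) (hb _ hx)

/-! ### The two-dimensional and four-dimensional representations -/

def mXE (s : ℂ) : Matrix (Fin 2) (Fin 2) ℂ := !![0, s; 0, 0]
def mXF : Matrix (Fin 2) (Fin 2) ℂ := !![0, 0; 1, 0]
def mXK (s : ℂ) : Matrix (Fin 2) (Fin 2) ℂ := !![s * Complex.I, 0; 0, -(s * Complex.I)]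
def mPE : Matrix (Fin 4) (Fin 4) ℂ := !![0, 0, 0, 0; 1, 0, 0, 0; 0, 0, 0, 0; 0, 0, 1, 0]
def mPF : Matrix (Fin 4) (Fin 4) ℂ := !![0, 0, 0, 0; 0, 0, 0, 0; 1, 0, 0, 0; 0, 1, 0, 0]
def mPK (s : ℂ) : Matrix (Fin 4) (Fin 4) ℂ := !![s, 0, 0, 0; 0, -s, 0, 0; 0, 0, -s, 0; 0, 0, 0, s]

lemma exists_repX (s : ℂ) (hs : s ^ 2 = 1) :
    ∃ ρ : Q →ₐ[ℂ] Matrix (Fin 2) (Fin 2) ℂ, ρ gE = mXE s ∧ ρ gF = mXF ∧ ρ gK = mXK s := by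
  have h2 : mXK s * mXK s = -1 := by
    ext i j
    fin_cases i <;> fin_cases j <;> simp [mXK, Matrix.mul_apply, Fin.sum_univ_two] <;>
      linear_combination (Complex.I * Complex.I) * hs + Complex.I_mul_I
  have h3 : mXK s ^ 3 = - mXK s := by rw [pow_succ, sq, h2, neg_mul, one_mul]
  have h4 : mXK s ^ 4 = 1 := by
    rw [pow_succ, h3, neg_mul, h2, neg_neg]
  refine exists_rep _ _ _ h4 ?_ ?_ ?_ ?_ ?_
  · ext i j
    fin_cases i <;> fin_cases j <;> simp [mXK, mXE, Matrix.mul_apply, Fin.sum_univ_two]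
    ring
  · ext i j
    fin_cases i <;> fin_cases j <;> simp [mXK, mXF, Matrix.mul_apply, Fin.sum_univ_two]
  · ext i j
    fin_cases i <;> fin_cases j <;> simp [mXE, Matrix.mul_apply, Fin.sum_univ_two]
  · ext i j
    fin_cases i <;> fin_cases j <;> simp [mXF, Matrix.mul_apply, Fin.sum_univ_two]
  · rw [h3]
    ext i j
    fin_cases i <;> fin_cases j <;> simp [mXK, mXE, mXF, Matrix.mul_apply, Fin.sum_univ_two]
    · linear_combination (-s) * Complex.I_mul_I
    · linear_combination s * Complex.I_mul_I

lemma exists_repP (s : ℂ) (hs : s ^ 2 = 1) :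
    ∃ ρ : Q →ₐ[ℂ] Matrix (Fin 4) (Fin 4) ℂ, ρ gE = mPE ∧ ρ gF = mPF ∧ ρ gK = mPK s := by
  have h2 : mPK s * mPK s = 1 := by
    ext i j
    fin_cases i <;> fin_cases j <;> simp [mPK, Matrix.mul_apply, Fin.sum_univ_four] <;>
      linear_combination hs
  have h3 : mPK s ^ 3 = mPK s := by rw [pow_succ, sq, h2, one_mul]
  have h4 : mPK s ^ 4 = 1 := by
    rw [pow_succ, h3, h2]
  refine exists_rep _ _ _ h4 ?_ ?_ ?_ ?_ ?_
  · ext i j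
    fin_cases i <;> fin_cases j <;> simp [mPK, mPE, Matrix.mul_apply, Fin.sum_univ_four]
  · ext i j
    fin_cases i <;> fin_cases j <;> simp [mPK, mPF, Matrix.mul_apply, Fin.sum_univ_four]
  · ext i j
    fin_cases i <;> fin_cases j <;> simp [mPE, Matrix.mul_apply, Fin.sum_univ_four]
  · ext i j
    fin_cases i <;> fin_cases j <;> simp [mPF, Matrix.mul_apply, Fin.sum_univ_four]
  · rw [h3, sub_self, smul_zero, add_zero]
    ext i j
    fin_cases i <;> fin_cases j <;> simp [mPE, mPF, Matrix.mul_apply, Fin.sum_univ_four]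

lemma one_sq' : (1 : ℂ) ^ 2 = 1 := one_pow 2
lemma neg_one_sq' : (-1 : ℂ) ^ 2 = 1 := by norm_num

/-- `X⁺₂`, `X⁻₂` and the two four-dimensional (projective) representations. -/
def rXp : Q →ₐ[ℂ] Matrix (Fin 2) (Fin 2) ℂ := (exists_repX 1 one_sq').choose
def rXm : Q →ₐ[ℂ] Matrix (Fin 2) (Fin 2) ℂ := (exists_repX (-1) neg_one_sq').choose
def rPp : Q →ₐ[ℂ] Matrix (Fin 4) (Fin 4) ℂ := (exists_repP 1 one_sq').choose
def rPm : Q →ₐ[ℂ] Matrix (Fin 4) (Fin 4) ℂ := (exists_repP (-1) neg_one_sq').choose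

lemma rXp_E (v : Fin 2 → ℂ) : (rXp gE).mulVec v = ![v 1, 0] := by
  rw [rXp, (exists_repX 1 one_sq').choose_spec.1]
  ext i; fin_cases i <;> simp [mXE, Matrix.mulVec, dotProduct, Fin.sum_univ_two]
lemma rXp_F (v : Fin 2 → ℂ) : (rXp gF).mulVec v = ![0, v 0] := by
  rw [rXp, (exists_repX 1 one_sq').choose_spec.2.1]
  ext i; fin_cases i <;> simp [mXF, Matrix.mulVec, dotProduct, Fin.sum_univ_two]
lemma rXp_K (v : Fin 2 → ℂ) : (rXp gK).mulVec v = ![Complex.I * v 0, -(Complex.I * v 1)] := by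
  rw [rXp, (exists_repX 1 one_sq').choose_spec.2.2]
  ext i; fin_cases i <;> simp [mXK, Matrix.mulVec, dotProduct, Fin.sum_univ_two]
lemma rXm_E (v : Fin 2 → ℂ) : (rXm gE).mulVec v = ![- v 1, 0] := by
  rw [rXm, (exists_repX (-1) neg_one_sq').choose_spec.1]
  ext i; fin_cases i <;> simp [mXE, Matrix.mulVec, dotProduct, Fin.sum_univ_two]
lemma rXm_F (v : Fin 2 → ℂ) : (rXm gF).mulVec v = ![0, v 0] := by
  rw [rXm, (exists_repX (-1) neg_one_sq').choose_spec.2.1]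
  ext i; fin_cases i <;> simp [mXF, Matrix.mulVec, dotProduct, Fin.sum_univ_two]
lemma rXm_K (v : Fin 2 → ℂ) : (rXm gK).mulVec v = ![-(Complex.I * v 0), Complex.I * v 1] := by
  rw [rXm, (exists_repX (-1) neg_one_sq').choose_spec.2.2]
  ext i; fin_cases i <;> simp [mXK, Matrix.mulVec, dotProduct, Fin.sum_univ_two]
lemma rPp_E (v : Fin 4 → ℂ) : (rPp gE).mulVec v = ![0, v 0, 0, v 2] := by
  rw [rPp, (exists_repP 1 one_sq').choose_spec.1]
  ext i; fin_cases i <;> simp [mPE, Matrix.mulVec, dotProduct, Fin.sum_univ_four]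
lemma rPp_F (v : Fin 4 → ℂ) : (rPp gF).mulVec v = ![0, 0, v 0, v 1] := by
  rw [rPp, (exists_repP 1 one_sq').choose_spec.2.1]
  ext i; fin_cases i <;> simp [mPF, Matrix.mulVec, dotProduct, Fin.sum_univ_four]
lemma rPp_K (v : Fin 4 → ℂ) : (rPp gK).mulVec v = ![v 0, -v 1, -v 2, v 3] := by
  rw [rPp, (exists_repP 1 one_sq').choose_spec.2.2]
  ext i; fin_cases i <;> simp [mPK, Matrix.mulVec, dotProduct, Fin.sum_univ_four]
lemma rPm_E (v : Fin 4 → ℂ) : (rPm gE).mulVec v = ![0, v 0, 0, v 2] := by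
  rw [rPm, (exists_repP (-1) neg_one_sq').choose_spec.1]
  ext i; fin_cases i <;> simp [mPE, Matrix.mulVec, dotProduct, Fin.sum_univ_four]
lemma rPm_F (v : Fin 4 → ℂ) : (rPm gF).mulVec v = ![0, 0, v 0, v 1] := by
  rw [rPm, (exists_repP (-1) neg_one_sq').choose_spec.2.1]
  ext i; fin_cases i <;> simp [mPF, Matrix.mulVec, dotProduct, Fin.sum_univ_four]
lemma rPm_K (v : Fin 4 → ℂ) : (rPm gK).mulVec v = ![-v 0, v 1, v 2, -v 3] := by
  rw [rPm, (exists_repP (-1) neg_one_sq').choose_spec.2.2]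
  ext i; fin_cases i <;> simp [mPK, Matrix.mulVec, dotProduct, Fin.sum_univ_four]

lemma rp_Ki {n : ℕ} (ρ : Q →ₐ[ℂ] Matrix (Fin n) (Fin n) ℂ) (v : Fin n → ℂ) :
    (ρ gKi).mulVec v = (ρ gK).mulVec ((ρ gK).mulVec ((ρ gK).mulVec v)) := by
  rw [q_Ki, map_pow, pow_succ, pow_succ, pow_one, Matrix.mulVec_mulVec, Matrix.mulVec_mulVec,
    mul_assoc]

/-! ### Faithfulness -/

/-- The space of coordinates on `Q`. -/
abbrev Coord : Type := (Fin 2 → ℂ) × (Fin 2 → ℂ) × (Fin 2 → ℂ) × (Fin 2 → ℂ) ×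
  (Fin 4 → ℂ) × (Fin 4 → ℂ)

/-- Coordinates of an element of `Q`. -/
def coord : Q →ₗ[ℂ] Coord where
  toFun x := ((rXp x).mulVec ![1, 0], (rXp x).mulVec ![0, 1], (rXm x).mulVec ![1, 0],
    (rXm x).mulVec ![0, 1], (rPp x).mulVec ![1, 0, 0, 0], (rPm x).mulVec ![1, 0, 0, 0])
  map_add' x y := by simp only [map_add, Matrix.add_mulVec, Prod.mk_add_mk]
  map_smul' c x := by
    simp only [map_smul, Matrix.smul_mulVec, Prod.smul_mk, RingHom.id_apply]

/-- The spectral projector of `K` for the eigenvalue `c⁻¹` (where `c⁴ = 1`). -/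
def prj (c : ℂ) : Q := (4:ℂ)⁻¹ • (1 + c • gK + c ^ 2 • gK ^ 2 + c ^ 3 • gK ^ 3)

/-- Inverse of `coord`. -/
def uncoord (w : Coord) : Q :=
  (w.1 0 • (gE * gF) + w.1 1 • gF) * prj (-Complex.I)
  + (w.2.1 0 • gE + w.2.1 1 • (gF * gE)) * prj Complex.I
  + (- w.2.2.1 0 • (gE * gF) + w.2.2.1 1 • gF) * prj Complex.I
  + (- w.2.2.2.1 0 • gE + (- w.2.2.2.1 1) • (gF * gE)) * prj (-Complex.I)
  + (w.2.2.2.2.1 0 • 1 + w.2.2.2.2.1 1 • gE + w.2.2.2.2.1 2 • gF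
      + w.2.2.2.2.1 3 • (gE * gF)) * prj 1
  + (w.2.2.2.2.2 0 • 1 + w.2.2.2.2.2 1 • gE + w.2.2.2.2.2 2 • gF
      + w.2.2.2.2.2 3 • (gE * gF)) * prj (-1)

lemma prj_K (c : ℂ) (hc : c ^ 4 = 1) : gK * prj c = c ^ 3 • prj c := by
  have h : gK * prj c =
      (4:ℂ)⁻¹ • (gK + c • gK ^ 2 + c ^ 2 • gK ^ 3 + c ^ 3 • gK ^ 4) := by
    simp only [prj, mul_add, mul_smul_comm, mul_one]
    rw [pow_succ' gK 3, pow_succ' gK 2, pow_two gK]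
  rw [h, q_K4, prj]
  match_scalars
  · linear_combination (-4⁻¹) * hc
  · linear_combination (-4⁻¹) * c * hc
  · linear_combination (-4⁻¹) * c^2 * hc
  · ring

lemma q_neg (a : Q) : -a = (-1:ℂ) • a := by module

lemma q_KE' : gK * gE = (-1:ℂ) • (gE * gK) := by rw [q_KE, q_neg]
lemma q_KF' : gK * gF = (-1:ℂ) • (gF * gK) := by rw [q_KF, q_neg]
lemma q_KEx (x : Q) : gK * (gE * x) = (-1:ℂ) • (gE * (gK * x)) := by
  rw [← mul_assoc, q_KE', smul_mul_assoc, mul_assoc]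
lemma q_KFx (x : Q) : gK * (gF * x) = (-1:ℂ) • (gF * (gK * x)) := by
  rw [← mul_assoc, q_KF', smul_mul_assoc, mul_assoc]
lemma q_EEx (x : Q) : gE * (gE * x) = 0 := by
  rw [← mul_assoc, q_EE, zero_mul]
lemma q_FFx (x : Q) : gF * (gF * x) = 0 := by
  rw [← mul_assoc, q_FF, zero_mul]
lemma q_FEx (x : Q) : gF * (gE * x) =
    gE * (gF * x) + (Complex.I / 2) • (gK * x - gK * (gK * (gK * x))) := by
  rw [← mul_assoc, q_FE, add_mul, smul_mul_assoc, sub_mul, pow_succ, pow_two]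
  simp only [mul_assoc]

lemma prj_Kx (c : ℂ) (hc : c ^ 4 = 1) : gK * prj c = c ^ 3 • prj c := prj_K c hc

lemma I4 : Complex.I ^ 4 = 1 := Complex.I_pow_four
lemma nI4 : (-Complex.I) ^ 4 = 1 := by
  linear_combination Complex.I_pow_four
lemma n14 : (-1 : ℂ) ^ 4 = 1 := by norm_num
lemma I6 : Complex.I ^ 6 = -1 := by
  rw [show 6 = 4 + 2 from rfl, pow_add, I4, Complex.I_sq, one_mul]
lemma I3 : Complex.I ^ 3 = -Complex.I := Complex.I_pow_three

lemma prj_I : gK * prj Complex.I = (-Complex.I) • prj Complex.I := by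
  rw [prj_K _ I4, I3]
lemma prj_nI : gK * prj (-Complex.I) = Complex.I • prj (-Complex.I) := by
  rw [prj_K _ nI4]
  congr 1
  linear_combination (-1) * I3
lemma prj_1 : gK * prj 1 = prj 1 := by
  rw [prj_K 1 (by norm_num)]; simp
lemma prj_n1 : gK * prj (-1) = (-1:ℂ) • prj (-1) := by
  rw [prj_K (-1) n14]; congr 1; norm_num


lemma uncoord_one : uncoord (coord 1) = 1 := by
  simp only [uncoord, coord, LinearMap.coe_mk, AddHom.coe_mk, map_one, Matrix.one_mulVec]
  simp only [Matrix.cons_val_zero, Matrix.cons_val_one, Matrix.cons_val, one_smul, zero_smul,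
    add_zero, zero_add, mul_assoc, add_mul, smul_mul_assoc, one_mul,
    prj_I, prj_nI, mul_smul_comm, q_FEx, neg_zero]
  simp only [prj]
  simp only [mul_add, mul_smul_comm, mul_one]
  match_scalars <;> ring_nf <;> simp only [I6, I4, I3, Complex.I_sq] <;> ring_nf

lemma uncoord_E (x : Q) : uncoord (coord (gE * x)) = gE * uncoord (coord x) := by
  simp only [uncoord, coord, LinearMap.coe_mk, AddHom.coe_mk, map_mul, ← Matrix.mulVec_mulVec,
    rXp_E, rXm_E, rPp_E, rPm_E]
  simp only [Matrix.cons_val_zero, Matrix.cons_val_one, Matrix.cons_val, zero_smul, mul_zero, smul_zero,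
    add_zero, zero_add, add_mul, mul_add, mul_assoc, q_EEx, q_FEx, smul_mul_assoc, mul_smul_comm,
    mul_sub, prj_I, prj_nI, prj_1, prj_n1, neg_zero, one_mul]
  match_scalars <;> ring_nf <;> simp only [I6, I4, I3, Complex.I_sq] <;> ring_nf

lemma uncoord_F (x : Q) : uncoord (coord (gF * x)) = gF * uncoord (coord x) := by
  simp only [uncoord, coord, LinearMap.coe_mk, AddHom.coe_mk, map_mul, ← Matrix.mulVec_mulVec,
    rXp_F, rXm_F, rPp_F, rPm_F]
  simp only [Matrix.cons_val_zero, Matrix.cons_val_one, Matrix.cons_val, zero_smul, mul_zero, smul_zero,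
    add_zero, zero_add, add_mul, mul_add, mul_assoc, q_EEx, q_FFx, q_KFx, q_FEx, smul_mul_assoc,
    mul_smul_comm, mul_sub, prj_I, prj_nI, prj_1, prj_n1, neg_zero, one_mul]
  match_scalars <;> ring_nf <;> simp only [I6, I4, I3, Complex.I_sq] <;> ring_nf

lemma uncoord_K (x : Q) : uncoord (coord (gK * x)) = gK * uncoord (coord x) := by
  simp only [uncoord, coord, LinearMap.coe_mk, AddHom.coe_mk, map_mul, ← Matrix.mulVec_mulVec,
    rXp_K, rXm_K, rPp_K, rPm_K]
  simp only [Matrix.cons_val_zero, Matrix.cons_val_one, Matrix.cons_val, zero_smul, mul_zero, smul_zero,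
    add_zero, zero_add, add_mul, mul_add, mul_assoc, q_EEx, q_FFx, q_KFx, q_KEx, q_FEx,
    smul_mul_assoc, mul_smul_comm, mul_sub, prj_I, prj_nI, prj_1, prj_n1, neg_zero, one_mul]
  match_scalars <;> ring_nf <;> simp only [I6, I4, I3, Complex.I_sq] <;> ring_nf

/-- `uncoord` as a linear map. -/
def uncoordL : Coord →ₗ[ℂ] Q where
  toFun := uncoord
  map_add' v w := by
    simp only [uncoord, Prod.fst_add, Prod.snd_add, Pi.add_apply, add_smul, neg_add, add_mul]
    abel
  map_smul' c w := by
    simp only [uncoord, Prod.smul_fst, Prod.smul_snd, Pi.smul_apply, smul_eq_mul, RingHom.id_apply,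
      add_mul, smul_mul_assoc]
    module

lemma uncoord_coord (x : Q) : uncoord (coord x) = x := by
  have h := q_induction (LinearMap.eqLocus (uncoordL ∘ₗ coord) LinearMap.id)
    uncoord_one
    (fun y hy => by
      change uncoord (coord y) = y at hy
      change uncoord (coord (gE * y)) = gE * y
      rw [uncoord_E, hy])
    (fun y hy => by
      change uncoord (coord y) = y at hy
      change uncoord (coord (gF * y)) = gF * y
      rw [uncoord_F, hy])
    (fun y hy => by
      change uncoord (coord y) = y at hy
      change uncoord (coord (gK * y)) = gK * y
      rw [uncoord_K, hy]) x
  exact h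

lemma q_ext {x y : Q} (h : coord x = coord y) : x = y := by
  rw [← uncoord_coord x, h, uncoord_coord]

/-! ### Action of `uncoord w` -/

lemma act_prj {n : ℕ} (ρ : Q →ₐ[ℂ] Matrix (Fin n) (Fin n) ℂ) (c : ℂ) (v : Fin n → ℂ) :
    (ρ (prj c)).mulVec v = (4:ℂ)⁻¹ • (v + c • (ρ gK).mulVec v
      + c ^ 2 • (ρ gK).mulVec ((ρ gK).mulVec v)
      + c ^ 3 • (ρ gK).mulVec ((ρ gK).mulVec ((ρ gK).mulVec v))) := by
  simp only [prj, map_add, map_smul, map_one, map_pow, Matrix.smul_mulVec, Matrix.add_mulVec,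
    Matrix.one_mulVec, Matrix.mulVec_mulVec, pow_succ, pow_zero, one_mul, mul_assoc, map_mul]

lemma rXp_prjI (v : Fin 2 → ℂ) : (rXp (prj Complex.I)).mulVec v = ![0, v 1] := by
  have hI := Complex.I_mul_I
  simp only [act_prj, rXp_K]
  ext i; fin_cases i <;> simp [Matrix.vecHead, Matrix.vecTail] <;> grind
lemma rXp_prjnI (v : Fin 2 → ℂ) : (rXp (prj (-Complex.I))).mulVec v = ![v 0, 0] := by
  have hI := Complex.I_mul_I
  simp only [act_prj, rXp_K]
  ext i; fin_cases i <;> simp [Matrix.vecHead, Matrix.vecTail] <;> grind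
lemma rXp_prj1 (v : Fin 2 → ℂ) : (rXp (prj 1)).mulVec v = ![0, 0] := by
  have hI := Complex.I_mul_I
  simp only [act_prj, rXp_K]
  ext i; fin_cases i <;> simp [Matrix.vecHead, Matrix.vecTail] <;> grind
lemma rXp_prjn1 (v : Fin 2 → ℂ) : (rXp (prj (-1))).mulVec v = ![0, 0] := by
  have hI := Complex.I_mul_I
  simp only [act_prj, rXp_K]
  ext i; fin_cases i <;> simp [Matrix.vecHead, Matrix.vecTail] <;> grind
lemma rXm_prjI (v : Fin 2 → ℂ) : (rXm (prj Complex.I)).mulVec v = ![v 0, 0] := by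
  have hI := Complex.I_mul_I
  simp only [act_prj, rXm_K]
  ext i; fin_cases i <;> simp [Matrix.vecHead, Matrix.vecTail] <;> grind
lemma rXm_prjnI (v : Fin 2 → ℂ) : (rXm (prj (-Complex.I))).mulVec v = ![0, v 1] := by
  have hI := Complex.I_mul_I
  simp only [act_prj, rXm_K]
  ext i; fin_cases i <;> simp [Matrix.vecHead, Matrix.vecTail] <;> grind
lemma rXm_prj1 (v : Fin 2 → ℂ) : (rXm (prj 1)).mulVec v = ![0, 0] := by
  have hI := Complex.I_mul_I
  simp only [act_prj, rXm_K]
  ext i; fin_cases i <;> simp [Matrix.vecHead, Matrix.vecTail] <;> grind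
lemma rXm_prjn1 (v : Fin 2 → ℂ) : (rXm (prj (-1))).mulVec v = ![0, 0] := by
  have hI := Complex.I_mul_I
  simp only [act_prj, rXm_K]
  ext i; fin_cases i <;> simp [Matrix.vecHead, Matrix.vecTail] <;> grind
lemma rPp_prjI (v : Fin 4 → ℂ) : (rPp (prj Complex.I)).mulVec v = ![0, 0, 0, 0] := by
  have hI := Complex.I_mul_I
  simp only [act_prj, rPp_K]
  ext i; fin_cases i <;> simp [Matrix.vecHead, Matrix.vecTail] <;> grind
lemma rPp_prjnI (v : Fin 4 → ℂ) : (rPp (prj (-Complex.I))).mulVec v = ![0, 0, 0, 0] := by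
  have hI := Complex.I_mul_I
  simp only [act_prj, rPp_K]
  ext i; fin_cases i <;> simp [Matrix.vecHead, Matrix.vecTail] <;> grind
lemma rPp_prj1 (v : Fin 4 → ℂ) : (rPp (prj 1)).mulVec v = ![v 0, 0, 0, v 3] := by
  have hI := Complex.I_mul_I
  simp only [act_prj, rPp_K]
  ext i; fin_cases i <;> simp [Matrix.vecHead, Matrix.vecTail] <;> grind
lemma rPp_prjn1 (v : Fin 4 → ℂ) : (rPp (prj (-1))).mulVec v = ![0, v 1, v 2, 0] := by
  have hI := Complex.I_mul_I
  simp only [act_prj, rPp_K]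
  ext i; fin_cases i <;> simp [Matrix.vecHead, Matrix.vecTail] <;> grind
lemma rPm_prjI (v : Fin 4 → ℂ) : (rPm (prj Complex.I)).mulVec v = ![0, 0, 0, 0] := by
  have hI := Complex.I_mul_I
  simp only [act_prj, rPm_K]
  ext i; fin_cases i <;> simp [Matrix.vecHead, Matrix.vecTail] <;> grind
lemma rPm_prjnI (v : Fin 4 → ℂ) : (rPm (prj (-Complex.I))).mulVec v = ![0, 0, 0, 0] := by
  have hI := Complex.I_mul_I
  simp only [act_prj, rPm_K]
  ext i; fin_cases i <;> simp [Matrix.vecHead, Matrix.vecTail] <;> grind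
lemma rPm_prj1 (v : Fin 4 → ℂ) : (rPm (prj 1)).mulVec v = ![0, v 1, v 2, 0] := by
  have hI := Complex.I_mul_I
  simp only [act_prj, rPm_K]
  ext i; fin_cases i <;> simp [Matrix.vecHead, Matrix.vecTail] <;> grind
lemma rPm_prjn1 (v : Fin 4 → ℂ) : (rPm (prj (-1))).mulVec v = ![v 0, 0, 0, v 3] := by
  have hI := Complex.I_mul_I
  simp only [act_prj, rPm_K]
  ext i; fin_cases i <;> simp [Matrix.vecHead, Matrix.vecTail] <;> grind

lemma act_mul {n : ℕ} (ρ : Q →ₐ[ℂ] Matrix (Fin n) (Fin n) ℂ) (x y : Q) (v : Fin n → ℂ) :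
    (ρ (x * y)).mulVec v = (ρ x).mulVec ((ρ y).mulVec v) := by
  rw [map_mul, Matrix.mulVec_mulVec]
lemma act_add {n : ℕ} (ρ : Q →ₐ[ℂ] Matrix (Fin n) (Fin n) ℂ) (x y : Q) (v : Fin n → ℂ) :
    (ρ (x + y)).mulVec v = (ρ x).mulVec v + (ρ y).mulVec v := by
  rw [map_add, Matrix.add_mulVec]
lemma act_sub {n : ℕ} (ρ : Q →ₐ[ℂ] Matrix (Fin n) (Fin n) ℂ) (x y : Q) (v : Fin n → ℂ) :
    (ρ (x - y)).mulVec v = (ρ x).mulVec v - (ρ y).mulVec v := by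
  rw [map_sub, Matrix.sub_mulVec]
lemma act_neg {n : ℕ} (ρ : Q →ₐ[ℂ] Matrix (Fin n) (Fin n) ℂ) (x : Q) (v : Fin n → ℂ) :
    (ρ (-x)).mulVec v = -(ρ x).mulVec v := by
  rw [map_neg, Matrix.neg_mulVec]
lemma act_smul {n : ℕ} (ρ : Q →ₐ[ℂ] Matrix (Fin n) (Fin n) ℂ) (c : ℂ) (x : Q) (v : Fin n → ℂ) :
    (ρ (c • x)).mulVec v = c • (ρ x).mulVec v := by
  rw [map_smul, Matrix.smul_mulVec]
lemma act_one {n : ℕ} (ρ : Q →ₐ[ℂ] Matrix (Fin n) (Fin n) ℂ) (v : Fin n → ℂ) :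
    (ρ 1).mulVec v = v := by
  rw [map_one, Matrix.one_mulVec]
lemma act_pow2 {n : ℕ} (ρ : Q →ₐ[ℂ] Matrix (Fin n) (Fin n) ℂ) (x : Q) (v : Fin n → ℂ) :
    (ρ (x ^ 2)).mulVec v = (ρ x).mulVec ((ρ x).mulVec v) := by
  rw [pow_two, act_mul]

lemma act_Xp (w : Coord) (v : Fin 2 → ℂ) : (rXp (uncoord w)).mulVec v =
    ![w.1 0 * v 0 + w.2.1 0 * v 1, w.1 1 * v 0 + w.2.1 1 * v 1] := by
  simp only [uncoord, act_add, act_mul, act_smul, act_one, rXp_prjI, rXp_prjnI, rXp_prj1,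
    rXp_prjn1, rXp_E, rXp_F]
  ext i; fin_cases i <;> simp
lemma act_Xm (w : Coord) (v : Fin 2 → ℂ) : (rXm (uncoord w)).mulVec v =
    ![w.2.2.1 0 * v 0 + w.2.2.2.1 0 * v 1, w.2.2.1 1 * v 0 + w.2.2.2.1 1 * v 1] := by
  simp only [uncoord, act_add, act_mul, act_smul, act_one, rXm_prjI, rXm_prjnI, rXm_prj1,
    rXm_prjn1, rXm_E, rXm_F]
  ext i; fin_cases i <;> simp
lemma act_Pp (w : Coord) (v : Fin 4 → ℂ) : (rPp (uncoord w)).mulVec v =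
    ![w.2.2.2.2.1 0 * v 0, w.2.2.2.2.1 1 * v 0 + w.2.2.2.2.2 0 * v 1,
      w.2.2.2.2.1 2 * v 0 + w.2.2.2.2.2 0 * v 2,
      w.2.2.2.2.1 3 * v 0 + w.2.2.2.2.1 0 * v 3
        + w.2.2.2.2.2 1 * v 2 + w.2.2.2.2.2 2 * v 1] := by
  simp only [uncoord, act_add, act_mul, act_smul, act_one, rPp_prjI, rPp_prjnI, rPp_prj1,
    rPp_prjn1, rPp_E, rPp_F]
  ext i; fin_cases i <;> simp
  ring
lemma act_Pm (w : Coord) (v : Fin 4 → ℂ) : (rPm (uncoord w)).mulVec v =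
    ![w.2.2.2.2.2 0 * v 0, w.2.2.2.2.2 1 * v 0 + w.2.2.2.2.1 0 * v 1,
      w.2.2.2.2.2 2 * v 0 + w.2.2.2.2.1 0 * v 2,
      w.2.2.2.2.2 3 * v 0 + w.2.2.2.2.2 0 * v 3
        + w.2.2.2.2.1 1 * v 2 + w.2.2.2.2.1 2 * v 1] := by
  simp only [uncoord, act_add, act_mul, act_smul, act_one, rPm_prjI, rPm_prjnI, rPm_prj1,
    rPm_prjn1, rPm_E, rPm_F]
  ext i; fin_cases i <;> simp <;> ring

lemma coord_eq (x : Q) : coord x = ((rXp x).mulVec ![1, 0], (rXp x).mulVec ![0, 1],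
    (rXm x).mulVec ![1, 0], (rXm x).mulVec ![0, 1], (rPp x).mulVec ![1, 0, 0, 0],
    (rPm x).mulVec ![1, 0, 0, 0]) := rfl

lemma coord_uncoord (w : Coord) : coord (uncoord w) = w := by
  obtain ⟨a, b, c, d, e, f⟩ := w
  rw [coord_eq, act_Xp, act_Xp, act_Xm, act_Xm, act_Pp, act_Pm]
  refine Prod.ext ?_ (Prod.ext ?_ (Prod.ext ?_ (Prod.ext ?_ (Prod.ext ?_ ?_)))) <;>
    (ext i; fin_cases i <;> simp)

lemma mem_center {x : Q} (hE : gE * x = x * gE) (hF : gF * x = x * gF) (hK : gK * x = x * gK) :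
    x ∈ Subalgebra.center ℂ Q := by
  rw [Subalgebra.mem_center_iff]
  intro b
  have h := q_induction
    (LinearMap.eqLocus (LinearMap.mulRight ℂ x) (LinearMap.mulLeft ℂ x))
    (by change (1 : Q) * x = x * 1; rw [one_mul, mul_one])
    (fun y hy => by
      change y * x = x * y at hy
      change gE * y * x = x * (gE * y)
      rw [mul_assoc, hy, ← mul_assoc, hE, mul_assoc])
    (fun y hy => by
      change y * x = x * y at hy
      change gF * y * x = x * (gF * y)
      rw [mul_assoc, hy, ← mul_assoc, hF, mul_assoc])
    (fun y hy => by
      change y * x = x * y at hy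
      change gK * y * x = x * (gK * y)
      rw [mul_assoc, hy, ← mul_assoc, hK, mul_assoc]) b
  exact h

/-- Coordinates of central elements. -/
def cenCoord : (Fin 5 → ℂ) →ₗ[ℂ] Coord where
  toFun c := (![c 0, 0], ![0, c 0], ![c 1, 0], ![0, c 1], ![c 2, 0, 0, c 3], ![c 2, 0, 0, c 4])
  map_add' a b := by simp
  map_smul' a b := by simp

lemma cen_central (c : Fin 5 → ℂ) : uncoord (cenCoord c) ∈ Subalgebra.center ℂ Q := by
  apply mem_center <;> apply q_ext <;> simp only [coord_eq, act_mul, act_Xp, act_Xm, act_Pp, act_Pm,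
    rXp_E, rXp_F, rXp_K, rXm_E, rXm_F, rXm_K, rPp_E, rPp_F, rPp_K, rPm_E, rPm_F, rPm_K] <;>
    simp [cenCoord, mul_comm]

lemma central_cen (w : Coord) (h : uncoord w ∈ Subalgebra.center ℂ Q) :
    ∃ c, cenCoord c = w := by
  rw [Subalgebra.mem_center_iff] at h
  have hE := congrArg coord (h gE)
  have hF := congrArg coord (h gF)
  have hK := congrArg coord (h gK)
  simp only [coord_eq, act_mul, act_Xp, act_Xm, act_Pp, act_Pm,
    rXp_E, rXp_F, rXp_K, rXm_E, rXm_F, rXm_K, rPp_E, rPp_F, rPp_K, rPm_E, rPm_F, rPm_K] at hE hF hK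
  simp at hE hF hK
  refine ⟨![w.1 0, w.2.2.1 0, w.2.2.2.2.1 0, w.2.2.2.2.1 3, w.2.2.2.2.2 3], ?_⟩
  obtain ⟨a, b, c, d, e, f⟩ := w
  simp only [cenCoord, LinearMap.coe_mk, AddHom.coe_mk]
  simp at hE hF hK
  refine Prod.ext ?_ (Prod.ext ?_ (Prod.ext ?_ (Prod.ext ?_ (Prod.ext ?_ ?_)))) <;>
    (ext i; fin_cases i <;> simp <;> grind)

lemma center_finrank : Module.finrank ℂ (Subalgebra.center ℂ Q) = 5 := by
  have hinj : Function.Injective (uncoordL ∘ₗ cenCoord) := by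
    intro a b hab
    change uncoord (cenCoord a) = uncoord (cenCoord b) at hab
    have h := congrArg coord hab
    rw [coord_uncoord, coord_uncoord] at h
    simp [cenCoord] at h
    ext i; fin_cases i <;> simp <;> grind
  have hr : LinearMap.range (uncoordL ∘ₗ cenCoord) =
      Subalgebra.toSubmodule (Subalgebra.center ℂ Q) := by
    ext x
    constructor
    · rintro ⟨c, rfl⟩
      exact cen_central c
    · intro hx
      have hx' : x ∈ Subalgebra.center ℂ Q := hx
      rw [← uncoord_coord x] at hx'
      obtain ⟨c, hc⟩ := central_cen _ hx'
      refine ⟨c, ?_⟩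
      change uncoord (cenCoord c) = x
      rw [hc, uncoord_coord]
  rw [← Subalgebra.finrank_toSubmodule, ← hr, LinearMap.finrank_range_of_inj hinj]
  simp

lemma K2_central : -(gK ^ 2) ∈ Subalgebra.center ℂ Q := by
  apply mem_center <;> apply q_ext <;> simp only [coord_eq, act_mul, act_neg, act_pow2,
    rXp_E, rXp_F, rXp_K, rXm_E, rXm_F, rXm_K, rPp_E, rPp_F, rPp_K, rPm_E, rPm_F, rPm_K] <;>
    simp

lemma Cas_central : (4:ℂ) • Cas ∈ Subalgebra.center ℂ Q := by
  apply mem_center <;> apply q_ext <;> simp only [Cas, coord_eq, act_mul, act_neg, act_pow2,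
    act_smul, act_sub, rp_Ki,
    rXp_E, rXp_F, rXp_K, rXm_E, rXm_F, rXm_K, rPp_E, rPp_F, rPp_K, rPm_E, rPm_F, rPm_K] <;>
    simp <;> grind [Complex.I_mul_I]

lemma four_indep :
    LinearIndependent ℂ ![(1:Q), -(gK ^ 2), (4:ℂ) • Cas, -((4:ℂ) • (Cas * gK ^ 2))] := by
  rw [Fintype.linearIndependent_iff]
  intro g hg
  rw [Fin.sum_univ_four] at hg
  have h := congrArg coord hg
  simp only [Matrix.cons_val_zero, Matrix.cons_val_one, Matrix.cons_val] at h
  rw [map_zero] at h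
  simp only [Cas, coord_eq, act_mul, act_neg, act_pow2, act_one, act_add,
    act_smul, act_sub, rp_Ki,
    rXp_E, rXp_F, rXp_K, rXm_E, rXm_F, rXm_K, rPp_E, rPp_F, rPp_K, rPm_E, rPm_F, rPm_K] at h
  simp at h
  intro i; fin_cases i <;> simp <;> grind [Complex.I_mul_I]

/-! ### The Drinfeld mapping -/

/-- `ρ ⊗ id : Q ⊗ Q → Mat₂(Q)`. -/
def TM (ρ : Q →ₐ[ℂ] Matrix (Fin 2) (Fin 2) ℂ) : TP2 ℂ Q →ₐ[ℂ] Matrix (Fin 2) (Fin 2) Q :=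
  Algebra.TensorProduct.lift ((Algebra.ofId ℂ Q).mapMatrix.comp ρ)
    (Matrix.scalarAlgHom (Fin 2) ℂ) (fun a b => by
      change _ * _ = _ * _
      ext i j
      simp [Matrix.scalarAlgHom, Algebra.ofId_apply, Algebra.commutes])

lemma TM_t2 (ρ : Q →ₐ[ℂ] Matrix (Fin 2) (Fin 2) ℂ) (a b : Q) :
    TM ρ (t2 a b) = !![ρ a 0 0 • b, ρ a 0 1 • b; ρ a 1 0 • b, ρ a 1 1 • b] := by
  ext i j
  fin_cases i <;> fin_cases j <;>
  simp [TM, t2, Matrix.scalarAlgHom, Algebra.ofId_apply, Algebra.smul_def]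

/-- `id ⊗ ρ` followed by the flip. -/
def flipAlg : TP2 ℂ Q →ₐ[ℂ] TP2 ℂ Q := (Algebra.TensorProduct.comm ℂ Q Q).toAlgHom

lemma flipA_eq (x : TP2 ℂ Q) : flipA ℂ Q x = flipAlg x := rfl
lemma flipAlg_t2 (a b : Q) : flipAlg (t2 a b) = t2 b a := rfl

lemma drin_TM (β : ℂ) (ρ : Q →ₐ[ℂ] Matrix (Fin 2) (Fin 2) ℂ) :
    drinfeldImg β (qTrM ρ) =
      (TM ρ (t2 gK 1) * (TM ρ (flipAlg (Rmat β)) * TM ρ (Rmat β))).trace := by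
  rw [← map_mul, ← flipA_eq]
  change _ = (TM ρ (t2 gK 1) * TM ρ (Mmat β)).trace
  rw [drinfeldImg]
  generalize Mmat β = z
  induction z using TensorProduct.induction_on with
  | zero => simp
  | add x y hx hy => rw [map_add, map_add, hx, hy, map_add, mul_add, Matrix.trace_add]
  | tmul a b =>
    change _ = (TM ρ (t2 gK 1) * TM ρ (t2 a b)).trace
    simp only [TM_t2, Matrix.trace_fin_two]
    simp [qTrM, Matrix.mul_apply, Fin.sum_univ_two, Matrix.trace_fin_two]
    module

/-- `ρ ⊗ id : Q ⊗ Q → Q` for a one-dimensional representation. -/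
def T1 (ρ : Q →ₐ[ℂ] ℂ) : TP2 ℂ Q →ₐ[ℂ] Q :=
  Algebra.TensorProduct.lift ((Algebra.ofId ℂ Q).comp ρ)
    (AlgHom.id ℂ Q) (fun a b => by
      change _ * _ = _ * _
      simp [Algebra.ofId_apply, Algebra.commutes])

lemma T1_t2 (ρ : Q →ₐ[ℂ] ℂ) (a b : Q) : T1 ρ (t2 a b) = ρ a • b := by
  simp [T1, t2, Algebra.ofId_apply, Algebra.smul_def]

lemma drin_T1 (β : ℂ) (ρ : Q →ₐ[ℂ] ℂ) :
    drinfeldImg β (qTr1 ρ) = ρ gK • (T1 ρ (flipAlg (Rmat β)) * T1 ρ (Rmat β)) := by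
  rw [← map_mul, ← flipA_eq]
  change _ = ρ gK • T1 ρ (Mmat β)
  rw [drinfeldImg]
  generalize Mmat β = z
  induction z using TensorProduct.induction_on with
  | zero => simp
  | add x y hx hy => rw [map_add, map_add, hx, hy, map_add, smul_add]
  | tmul a b =>
    change _ = ρ gK • T1 ρ (t2 a b)
    simp only [T1_t2]
    simp [qTr1]
    module

lemma act_rXp_e0 (v : Fin 2 → ℂ) : (rXp e0).mulVec v = 0 := by
  have hI := Complex.I_mul_I
  simp only [e0, act_smul, act_add, act_one, act_pow2, rXp_K]
  ext i; fin_cases i <;> simp [Matrix.vecHead, Matrix.vecTail] <;> grind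
lemma act_rXm_e0 (v : Fin 2 → ℂ) : (rXm e0).mulVec v = 0 := by
  have hI := Complex.I_mul_I
  simp only [e0, act_smul, act_add, act_one, act_pow2, rXm_K]
  ext i; fin_cases i <;> simp [Matrix.vecHead, Matrix.vecTail] <;> grind
lemma act_rPp_e0 (v : Fin 4 → ℂ) : (rPp e0).mulVec v = v := by
  simp only [e0, act_smul, act_add, act_one, act_pow2, rPp_K]
  ext i; fin_cases i <;> simp [Matrix.vecHead, Matrix.vecTail] <;> grind
lemma act_rPm_e0 (v : Fin 4 → ℂ) : (rPm e0).mulVec v = v := by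
  simp only [e0, act_smul, act_add, act_one, act_pow2, rPm_K]
  ext i; fin_cases i <;> simp [Matrix.vecHead, Matrix.vecTail] <;> grind
lemma e1_eq : e1 = 1 - e0 := by
  simp only [e0, e1]; module
lemma act_rXp_e1 (v : Fin 2 → ℂ) : (rXp e1).mulVec v = v := by
  rw [e1_eq, act_sub, act_one, act_rXp_e0, sub_zero]
lemma act_rXm_e1 (v : Fin 2 → ℂ) : (rXm e1).mulVec v = v := by
  rw [e1_eq, act_sub, act_one, act_rXm_e0, sub_zero]
lemma act_rPp_e1 (v : Fin 4 → ℂ) : (rPp e1).mulVec v = 0 := by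
  rw [e1_eq, act_sub, act_one, act_rPp_e0, sub_self]
lemma act_rPm_e1 (v : Fin 4 → ℂ) : (rPm e1).mulVec v = 0 := by
  rw [e1_eq, act_sub, act_one, act_rPm_e0, sub_self]

lemma drin_one (β : ℂ) (ρ : Q →ₐ[ℂ] ℂ) (hE : ρ gE = 0) (hF : ρ gF = 0) (hK : ρ gK = 1) :
    drinfeldImg β (qTr1 ρ) = 1 := by
  have hI := Complex.I_mul_I
  have he0 : ρ e0 = 1 := by simp [e0, hK]; norm_num
  have he1 : ρ e1 = 0 := by simp [e1, hK]
  rw [drin_T1]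
  simp only [Rmat, R00, R01, R10, R11, eEF, eEK, eFK, eEFK, map_add, map_sub, map_mul, map_smul,
    flipAlg_t2, T1_t2, hE, hF, hK, he0, he1, map_one, mul_zero, zero_mul, one_mul, mul_one,
    zero_smul, one_smul, smul_zero, add_zero, sub_zero, smul_mul_assoc]
  apply q_ext
  simp only [coord_eq, act_mul, act_neg, act_pow2, act_one, act_add, act_smul, act_sub,
    act_rXp_e0, act_rXm_e0, act_rPp_e0, act_rPm_e0, act_rXp_e1, act_rXm_e1, act_rPp_e1, act_rPm_e1,
    Matrix.mulVec_zero, smul_zero, add_zero, zero_add, sub_zero, rp_Ki,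
    rXp_E, rXp_F, rXp_K, rXm_E, rXm_F, rXm_K, rPp_E, rPp_F, rPp_K, rPm_E, rPm_F, rPm_K]
  refine Prod.ext ?_ (Prod.ext ?_ (Prod.ext ?_ (Prod.ext ?_ (Prod.ext ?_ ?_)))) <;>
    (ext i; fin_cases i <;> simp <;> grind)

lemma drin_sgn (β : ℂ) (ρ : Q →ₐ[ℂ] ℂ) (hE : ρ gE = 0) (hF : ρ gF = 0) (hK : ρ gK = -1) :
    drinfeldImg β (qTr1 ρ) = -(gK ^ 2) := by
  have hI := Complex.I_mul_I
  have he0 : ρ e0 = 1 := by simp [e0, hK]; norm_num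
  have he1 : ρ e1 = 0 := by simp [e1, hK]
  rw [drin_T1]
  simp only [Rmat, R00, R01, R10, R11, eEF, eEK, eFK, eEFK, map_add, map_sub, map_mul, map_smul,
    flipAlg_t2, T1_t2, hE, hF, hK, he0, he1, map_one, mul_zero, zero_mul, one_mul, mul_one,
    zero_smul, one_smul, smul_zero, add_zero, sub_zero, smul_mul_assoc]
  apply q_ext
  simp only [coord_eq, act_mul, act_neg, act_pow2, act_one, act_add, act_smul, act_sub,
    act_rXp_e0, act_rXm_e0, act_rPp_e0, act_rPm_e0, act_rXp_e1, act_rXm_e1, act_rPp_e1, act_rPm_e1,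
    Matrix.mulVec_zero, smul_zero, add_zero, zero_add, sub_zero, rp_Ki,
    rXp_E, rXp_F, rXp_K, rXm_E, rXm_F, rXm_K, rPp_E, rPp_F, rPp_K, rPm_E, rPm_F, rPm_K]
  refine Prod.ext ?_ (Prod.ext ?_ (Prod.ext ?_ (Prod.ext ?_ (Prod.ext ?_ ?_)))) <;>
    (ext i; fin_cases i <;> simp <;> grind)

lemma mat_mul_ring (a b c d a' b' c' d' : Q) : !![a, b; c, d] * !![a', b'; c', d'] =
    !![a * a' + b * c', a * b' + b * d'; c * a' + d * c', c * b' + d * d'] := by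
  rw [Matrix.mul_fin_two]
lemma mat_smul (r : ℂ) (a b c d : Q) : r • !![a, b; c, d] = !![r • a, r • b; r • c, r • d] := by
  ext i j; fin_cases i <;> fin_cases j <;> rfl
lemma mat_add (a b c d a' b' c' d' : Q) : !![a, b; c, d] + !![a', b'; c', d'] =
    !![a + a', b + b'; c + c', d + d'] := by
  ext i j; fin_cases i <;> fin_cases j <;> rfl
lemma mat_sub (a b c d a' b' c' d' : Q) : !![a, b; c, d] - !![a', b'; c', d'] =
    !![a - a', b - b'; c - c', d - d'] := by
  ext i j; fin_cases i <;> fin_cases j <;> rfl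

lemma smul_mul_eq (r s : ℂ) (a b a' b' : Matrix (Fin 2) (Fin 2) Q) (h : s = 2 * r)
    (ha : a = (2:ℂ) • a') (hb : b = b') : r • (a * b) = s • (a' * b') := by
  rw [h, ha, hb, smul_mul_assoc, smul_smul, mul_comm r]

lemma drin_Xp (β : ℂ) (hβ : β ^ 2 = Complex.I) (ρ : Q →ₐ[ℂ] Matrix (Fin 2) (Fin 2) ℂ)
    (hE : ρ gE = !![0, 1; 0, 0]) (hF : ρ gF = !![0, 0; 1, 0])
    (hK : ρ gK = !![Complex.I, 0; 0, -Complex.I]) :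
    drinfeldImg β (qTrM ρ) = (4:ℂ) • Cas := by
  have hI := Complex.I_mul_I
  have hKK : ρ (gK ^ 2) = -1 := by
    rw [map_pow, sq, hK]
    ext i j; fin_cases i <;> fin_cases j <;> simp
  have he0 : ρ e0 = 0 := by rw [e0, map_smul, map_add, hKK, map_one]; simp
  have he1 : ρ e1 = 1 := by rw [e1_eq, map_sub, he0, map_one, sub_zero]
  have hEF : ρ eEF = !![1, 0; 0, 0] := by
    rw [eEF, map_mul, hE, hF]; ext i j; fin_cases i <;> fin_cases j <;> simp
  have hEK : ρ eEK = !![0, -Complex.I; 0, 0] := by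
    rw [eEK, map_mul, hE, hK]; ext i j; fin_cases i <;> fin_cases j <;> simp
  have hFK : ρ eFK = !![0, 0; Complex.I, 0] := by
    rw [eFK, map_mul, hF, hK]; ext i j; fin_cases i <;> fin_cases j <;> simp
  have hEFK : ρ eEFK = !![Complex.I, 0; 0, 0] := by
    rw [eEFK, map_mul, ← eEF, hEF, hK]; ext i j; fin_cases i <;> fin_cases j <;> simp
  have h10 : TM ρ (R10) = (1) • (!![1, 0; 0, gK] *
      !![gK + (1 + Complex.I) • eEF, (1 - Complex.I) • eFK; (1 + Complex.I) • gE, gK - (1 - Complex.I) • eEF]) := by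
    simp only [R10, R01, R11, map_add, map_sub, map_mul, map_smul, flipAlg_t2, map_neg]
    refine smul_mul_eq _ _ _ _ _ _ ?_ ?_ ?_
    · ring
    · simp only [TM_t2, hK, hE, hF, hEF, hEK, hFK, hEFK, map_one, mat_smul, mat_add, mat_sub]
      ext i j; fin_cases i <;> fin_cases j <;> simp <;>
        match_scalars <;> grind
    · simp only [TM_t2, hK, hE, hF, hEF, hEK, hFK, hEFK, map_one, mat_smul, mat_add, mat_sub]
      ext i j; fin_cases i <;> fin_cases j <;> simp <;>
        match_scalars <;> grind
  have h01 : TM ρ (flipAlg (R01)) = (1) • (!![1, 0; 0, gK] *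
      !![1 + (Complex.I - 1) • eEFK, (-1 - Complex.I) • eFK; (Complex.I - 1) • gE, 1 + (1 + Complex.I) • eEFK]) := by
    simp only [R10, R01, R11, map_add, map_sub, map_mul, map_smul, flipAlg_t2, map_neg]
    refine smul_mul_eq _ _ _ _ _ _ ?_ ?_ ?_
    · ring
    · simp only [TM_t2, hK, hE, hF, hEF, hEK, hFK, hEFK, map_one, mat_smul, mat_add, mat_sub]
      ext i j; fin_cases i <;> fin_cases j <;> simp <;>
        match_scalars <;> grind
    · simp only [TM_t2, hK, hE, hF, hEF, hEK, hFK, hEFK, map_one, mat_smul, mat_add, mat_sub]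
      ext i j; fin_cases i <;> fin_cases j <;> simp <;>
        match_scalars <;> grind
  have h11 : TM ρ (R11 β) = (β) • (!![1, 0; 0, (-Complex.I) • gK] *
      !![(-Complex.I) • (1:Q) + (1 - Complex.I) • eEFK, (2:ℂ) • gF; 0, (-1:ℂ) • (1:Q) - (1 + Complex.I) • eEFK]) := by
    simp only [R10, R01, R11, map_add, map_sub, map_mul, map_smul, flipAlg_t2, map_neg]
    refine smul_mul_eq _ _ _ _ _ _ ?_ ?_ ?_
    · ring
    · simp only [TM_t2, hK, hE, hF, hEF, hEK, hFK, hEFK, map_one, mat_smul, mat_add, mat_sub]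
      ext i j; fin_cases i <;> fin_cases j <;> simp <;>
        match_scalars <;> grind
    · simp only [TM_t2, hK, hE, hF, hEF, hEK, hFK, hEFK, map_one, mat_smul, mat_add, mat_sub]
      ext i j; fin_cases i <;> fin_cases j <;> simp <;>
        match_scalars <;> grind
  have f11 : TM ρ (flipAlg (R11 β)) = (β) • (!![1, 0; 0, (-Complex.I) • gK] *
      !![gK + (1 - Complex.I) • eEF, 0; (2 * Complex.I) • eEK, (-Complex.I) • gK - (1 + Complex.I) • eEF]) := by
    simp only [R10, R01, R11, map_add, map_sub, map_mul, map_smul, flipAlg_t2, map_neg]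
    refine smul_mul_eq _ _ _ _ _ _ ?_ ?_ ?_
    · ring
    · simp only [TM_t2, hK, hE, hF, hEF, hEK, hFK, hEFK, map_one, mat_smul, mat_add, mat_sub]
      ext i j; fin_cases i <;> fin_cases j <;> simp <;>
        match_scalars <;> grind
    · simp only [TM_t2, hK, hE, hF, hEF, hEK, hFK, hEFK, map_one, mat_smul, mat_add, mat_sub]
      ext i j; fin_cases i <;> fin_cases j <;> simp <;>
        match_scalars <;> grind
  have z0 : ∀ b, TM ρ (t2 e0 b) = 0 := fun b => by
    rw [TM_t2, he0]; ext i j; fin_cases i <;> fin_cases j <;> simp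
  have z1 : ∀ b, TM ρ (t2 e1 b) = !![b, 0; 0, b] := fun b => by
    rw [TM_t2, he1]; ext i j; fin_cases i <;> fin_cases j <;> simp
  have hk : TM ρ (t2 gK 1) = !![Complex.I • (1:Q), 0; 0, (-Complex.I) • (1:Q)] := by
    rw [TM_t2, hK]; ext i j; fin_cases i <;> fin_cases j <;> simp
  rw [drin_TM]
  simp only [Rmat, map_add, map_mul, flipAlg_t2, z0, z1, h10, h01, h11, f11, hk, mul_zero,
    zero_add, add_zero]
  simp only [mat_mul_ring, mat_smul, mat_add, mul_zero, zero_mul, zero_add, add_zero, one_mul,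
    mul_one, one_smul, smul_zero]
  rw [Matrix.trace_fin_two_of]
  apply q_ext
  simp only [Cas, eEF, eEK, eFK, eEFK]
  simp only [coord_eq, act_mul, act_neg, act_pow2, act_one, act_add, act_smul, act_sub,
    act_rXp_e0, act_rXm_e0, act_rPp_e0, act_rPm_e0, act_rXp_e1, act_rXm_e1, act_rPp_e1, act_rPm_e1,
    Matrix.mulVec_zero, smul_zero, add_zero, zero_add, sub_zero, rp_Ki,
    rXp_E, rXp_F, rXp_K, rXm_E, rXm_F, rXm_K, rPp_E, rPp_F, rPp_K, rPm_E, rPm_F, rPm_K]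
  refine Prod.ext ?_ (Prod.ext ?_ (Prod.ext ?_ (Prod.ext ?_ (Prod.ext ?_ ?_)))) <;>
    (ext i; fin_cases i <;> simp <;> grind)

lemma drin_Xm (β : ℂ) (hβ : β ^ 2 = Complex.I) (ρ : Q →ₐ[ℂ] Matrix (Fin 2) (Fin 2) ℂ)
    (hE : ρ gE = !![0, -1; 0, 0]) (hF : ρ gF = !![0, 0; 1, 0])
    (hK : ρ gK = !![-Complex.I, 0; 0, Complex.I]) :
    drinfeldImg β (qTrM ρ) = -((4:ℂ) • (Cas * gK ^ 2)) := by
  have hI := Complex.I_mul_I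
  have hKK : ρ (gK ^ 2) = -1 := by
    rw [map_pow, sq, hK]
    ext i j; fin_cases i <;> fin_cases j <;> simp
  have he0 : ρ e0 = 0 := by rw [e0, map_smul, map_add, hKK, map_one]; simp
  have he1 : ρ e1 = 1 := by rw [e1_eq, map_sub, he0, map_one, sub_zero]
  have hEF : ρ eEF = !![-1, 0; 0, 0] := by
    rw [eEF, map_mul, hE, hF]; ext i j; fin_cases i <;> fin_cases j <;> simp
  have hEK : ρ eEK = !![0, -Complex.I; 0, 0] := by
    rw [eEK, map_mul, hE, hK]; ext i j; fin_cases i <;> fin_cases j <;> simp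
  have hFK : ρ eFK = !![0, 0; -Complex.I, 0] := by
    rw [eFK, map_mul, hF, hK]; ext i j; fin_cases i <;> fin_cases j <;> simp
  have hEFK : ρ eEFK = !![Complex.I, 0; 0, 0] := by
    rw [eEFK, map_mul, ← eEF, hEF, hK]; ext i j; fin_cases i <;> fin_cases j <;> simp
  have h10 : TM ρ (R10) = (1) • (!![gK, 0; 0, 1] *
      !![gK + (1 + Complex.I) • eEF, (Complex.I - 1) • eFK; (-1 - Complex.I) • gE, gK - (1 - Complex.I) • eEF]) := by
    simp only [R10, R01, R11, map_add, map_sub, map_mul, map_smul, flipAlg_t2, map_neg]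
    refine smul_mul_eq _ _ _ _ _ _ ?_ ?_ ?_
    · ring
    · simp only [TM_t2, hK, hE, hF, hEF, hEK, hFK, hEFK, map_one, mat_smul, mat_add, mat_sub]
      ext i j; fin_cases i <;> fin_cases j <;> simp <;>
        match_scalars <;> grind
    · simp only [TM_t2, hK, hE, hF, hEF, hEK, hFK, hEFK, map_one, mat_smul, mat_add, mat_sub]
      ext i j; fin_cases i <;> fin_cases j <;> simp <;>
        match_scalars <;> grind
  have h01 : TM ρ (flipAlg (R01)) = (1) • (!![gK, 0; 0, 1] *
      !![1 + (Complex.I - 1) • eEFK, (-1 - Complex.I) • eFK; (Complex.I - 1) • gE, 1 + (1 + Complex.I) • eEFK]) := by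
    simp only [R10, R01, R11, map_add, map_sub, map_mul, map_smul, flipAlg_t2, map_neg]
    refine smul_mul_eq _ _ _ _ _ _ ?_ ?_ ?_
    · ring
    · simp only [TM_t2, hK, hE, hF, hEF, hEK, hFK, hEFK, map_one, mat_smul, mat_add, mat_sub]
      ext i j; fin_cases i <;> fin_cases j <;> simp <;>
        match_scalars <;> grind
    · simp only [TM_t2, hK, hE, hF, hEF, hEK, hFK, hEFK, map_one, mat_smul, mat_add, mat_sub]
      ext i j; fin_cases i <;> fin_cases j <;> simp <;>
        match_scalars <;> grind
  have h11 : TM ρ (R11 β) = (β) • (!![(-Complex.I) • gK, 0; 0, 1] *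
      !![Complex.I • (1:Q) + (Complex.I - 1) • eEFK, (2:ℂ) • gF; 0, (1:Q) + (1 + Complex.I) • eEFK]) := by
    simp only [R10, R01, R11, map_add, map_sub, map_mul, map_smul, flipAlg_t2, map_neg]
    refine smul_mul_eq _ _ _ _ _ _ ?_ ?_ ?_
    · ring
    · simp only [TM_t2, hK, hE, hF, hEF, hEK, hFK, hEFK, map_one, mat_smul, mat_add, mat_sub]
      ext i j; fin_cases i <;> fin_cases j <;> simp <;>
        match_scalars <;> grind
    · simp only [TM_t2, hK, hE, hF, hEF, hEK, hFK, hEFK, map_one, mat_smul, mat_add, mat_sub]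
      ext i j; fin_cases i <;> fin_cases j <;> simp <;>
        match_scalars <;> grind
  have f11 : TM ρ (flipAlg (R11 β)) = (β) • (!![(-Complex.I) • gK, 0; 0, 1] *
      !![gK + (1 - Complex.I) • eEF, 0; (2 * Complex.I) • eEK, (-Complex.I) • gK - (1 + Complex.I) • eEF]) := by
    simp only [R10, R01, R11, map_add, map_sub, map_mul, map_smul, flipAlg_t2, map_neg]
    refine smul_mul_eq _ _ _ _ _ _ ?_ ?_ ?_
    · ring
    · simp only [TM_t2, hK, hE, hF, hEF, hEK, hFK, hEFK, map_one, mat_smul, mat_add, mat_sub]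
      ext i j; fin_cases i <;> fin_cases j <;> simp <;>
        match_scalars <;> grind
    · simp only [TM_t2, hK, hE, hF, hEF, hEK, hFK, hEFK, map_one, mat_smul, mat_add, mat_sub]
      ext i j; fin_cases i <;> fin_cases j <;> simp <;>
        match_scalars <;> grind
  have z0 : ∀ b, TM ρ (t2 e0 b) = 0 := fun b => by
    rw [TM_t2, he0]; ext i j; fin_cases i <;> fin_cases j <;> simp
  have z1 : ∀ b, TM ρ (t2 e1 b) = !![b, 0; 0, b] := fun b => by
    rw [TM_t2, he1]; ext i j; fin_cases i <;> fin_cases j <;> simp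
  have hk : TM ρ (t2 gK 1) = !![(-Complex.I) • (1:Q), 0; 0, Complex.I • (1:Q)] := by
    rw [TM_t2, hK]; ext i j; fin_cases i <;> fin_cases j <;> simp
  rw [drin_TM]
  simp only [Rmat, map_add, map_mul, flipAlg_t2, z0, z1, h10, h01, h11, f11, hk, mul_zero,
    zero_add, add_zero]
  simp only [mat_mul_ring, mat_smul, mat_add, mul_zero, zero_mul, zero_add, add_zero, one_mul,
    mul_one, one_smul, smul_zero]
  rw [Matrix.trace_fin_two_of]
  apply q_ext
  simp only [Cas, eEF, eEK, eFK, eEFK]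
  simp only [coord_eq, act_mul, act_neg, act_pow2, act_one, act_add, act_smul, act_sub,
    act_rXp_e0, act_rXm_e0, act_rPp_e0, act_rPm_e0, act_rXp_e1, act_rXm_e1, act_rPp_e1, act_rPm_e1,
    Matrix.mulVec_zero, smul_zero, add_zero, zero_add, sub_zero, rp_Ki,
    rXp_E, rXp_F, rXp_K, rXm_E, rXm_F, rXm_K, rPp_E, rPp_F, rPp_K, rPm_E, rPm_F, rPm_K]
  refine Prod.ext ?_ (Prod.ext ?_ (Prod.ext ?_ (Prod.ext ?_ (Prod.ext ?_ ?_)))) <;>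
    (ext i; fin_cases i <;> simp <;> grind)


/-- the simple modules `X±₁, X±₂` of `Q`, their images under the
Drinfeld mapping composed with the q-trace (balancing element `g = K⁻¹`, i.e.
`β² = i`), and the resulting four-dimensional subspace of the five-dimensional
centre. -/
theorem statement19 (β : ℂ) (hβ : β ^ 2 = Complex.I) :
    (∃ ρ : Q →ₐ[ℂ] ℂ, ρ gE = 0 ∧ ρ gF = 0 ∧ ρ gK = 1) ∧
    (∃ ρ : Q →ₐ[ℂ] ℂ, ρ gE = 0 ∧ ρ gF = 0 ∧ ρ gK = -1) ∧
    (∃ ρ : Q →ₐ[ℂ] Matrix (Fin 2) (Fin 2) ℂ,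
      ρ gE = !![0, 1; 0, 0] ∧ ρ gF = !![0, 0; 1, 0] ∧
      ρ gK = !![Complex.I, 0; 0, -Complex.I]) ∧
    (∃ ρ : Q →ₐ[ℂ] Matrix (Fin 2) (Fin 2) ℂ,
      ρ gE = !![0, -1; 0, 0] ∧ ρ gF = !![0, 0; 1, 0] ∧
      ρ gK = !![-Complex.I, 0; 0, Complex.I]) ∧
    (∀ ρ : Q →ₐ[ℂ] ℂ, ρ gE = 0 → ρ gF = 0 → ρ gK = 1 →
      drinfeldImg β (qTr1 ρ) = 1) ∧
    (∀ ρ : Q →ₐ[ℂ] ℂ, ρ gE = 0 → ρ gF = 0 → ρ gK = -1 →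
      drinfeldImg β (qTr1 ρ) = -(gK ^ 2)) ∧
    (∀ ρ : Q →ₐ[ℂ] Matrix (Fin 2) (Fin 2) ℂ,
      ρ gE = !![0, 1; 0, 0] → ρ gF = !![0, 0; 1, 0] →
      ρ gK = !![Complex.I, 0; 0, -Complex.I] →
      drinfeldImg β (qTrM ρ) = (4:ℂ) • Cas) ∧
    (∀ ρ : Q →ₐ[ℂ] Matrix (Fin 2) (Fin 2) ℂ,
      ρ gE = !![0, -1; 0, 0] → ρ gF = !![0, 0; 1, 0] →
      ρ gK = !![-Complex.I, 0; 0, Complex.I] →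
      drinfeldImg β (qTrM ρ) = -((4:ℂ) • (Cas * gK ^ 2))) ∧
    ((1:Q) ∈ Subalgebra.center ℂ Q ∧ -(gK ^ 2) ∈ Subalgebra.center ℂ Q ∧
      (4:ℂ) • Cas ∈ Subalgebra.center ℂ Q ∧
      -((4:ℂ) • (Cas * gK ^ 2)) ∈ Subalgebra.center ℂ Q) ∧
    LinearIndependent ℂ ![(1:Q), -(gK ^ 2), (4:ℂ) • Cas, -((4:ℂ) • (Cas * gK ^ 2))] ∧
    Module.finrank ℂ (Subalgebra.center ℂ Q) = 5 := by
  refine ⟨?_, ?_, ?_, ?_, drin_one β, drin_sgn β, drin_Xp β hβ, drin_Xm β hβ,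
    ⟨Subalgebra.one_mem _, K2_central, Cas_central, ?_⟩, four_indep, center_finrank⟩
  · exact exists_rep 0 0 1 (by simp) (by simp) (by simp) (by simp) (by simp) (by simp)
  · exact exists_rep 0 0 (-1) (by norm_num) (by simp) (by simp) (by simp) (by simp) (by norm_num)
  · obtain ⟨ρ, h1, h2, h3⟩ := exists_repX 1 one_sq'
    refine ⟨ρ, ?_, ?_, ?_⟩
    · rw [h1, mXE]
    · rw [h2, mXF]
    · rw [h3, mXK]; simp
  · obtain ⟨ρ, h1, h2, h3⟩ := exists_repX (-1) neg_one_sq'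
    refine ⟨ρ, ?_, ?_, ?_⟩
    · rw [h1, mXE]
    · rw [h2, mXF]
    · rw [h3, mXK]; simp
  · have h := Subalgebra.mul_mem _ Cas_central K2_central
    have e : -((4:ℂ) • (Cas * gK ^ 2)) = ((4:ℂ) • Cas) * (-(gK ^ 2)) := by
      rw [q_neg, q_neg (gK ^ 2), mul_smul_comm, smul_mul_assoc]
    rw [e]
    exact h
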